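/- Suppose u ∈ C²(S² \ {S, N}) is a (−1)-homogeneous axisymmetric solution of the stationary Navier–Stokes equations satisfying limsup_{x∈S², |x'|→0} |u(x)|/|ln|x'|| < ∞. Then u_φ ≡ 0 (u has no swirl), and the two limits lim_{x∈S², x→S} |u(x)|/ln|x'| and lim_{x∈S², x→N} |u(x)|/ln|x'| exist, are finite, are equal to each other, and are nonpositive. -/

import Mathlib

noncomputable section

open Real Filter MeasureTheory Metric Topology
open scoped ENNReal InnerProductSpace

abbrev V3 := EuclideanSpace ℝ (Fin 3)
abbrev V2 := EuclideanSpace ℝ (Fin 2)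

/-- standard basis vector in `ℝ³` -/
def e3 (j : Fin 3) : V3 := EuclideanSpace.single j 1

/-- partial derivative `∂_j f` -/
def pd (j : Fin 3) (f : V3 → ℝ) (x : V3) : ℝ := fderiv ℝ f x (e3 j)

/-- Laplacian on `ℝ³` -/
def lap3 (f : V3 → ℝ) (x : V3) : ℝ := ∑ j, pd j (fun y => pd j f y) x

/-- stationary Navier–Stokes equations `-Δu + (u·∇)u + ∇p = 0`, `div u = 0` at `x` -/
def NSEq (u : V3 → V3) (p : V3 → ℝ) (x : V3) : Prop :=
  (∀ i, - lap3 (fun z => u z i) x + (∑ j, u x j * pd j (fun z => u z i) x) + pd i p x = 0)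
  ∧ (∑ j, pd j (fun z => u z j) x) = 0

/-- stationary Euler equations `(u·∇)u + ∇p = 0`, `div u = 0` at `x` -/
def EulerEq (u : V3 → V3) (p : V3 → ℝ) (x : V3) : Prop :=
  (∀ i, (∑ j, u x j * pd j (fun z => u z i) x) + pd i p x = 0)
  ∧ (∑ j, pd j (fun z => u z j) x) = 0

/-- south pole -/
def S3 : V3 := EuclideanSpace.single 2 (-1)
/-- north pole -/
def N3 : V3 := EuclideanSpace.single 2 1

/-- the unit sphere `S²` -/
def sphere2 : Set V3 := Metric.sphere (0 : V3) 1

/-- the open cone over a subset of the unit sphere -/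
def cone3 (Ω : Set V3) : Set V3 := {x : V3 | x ≠ 0 ∧ (‖x‖⁻¹ • x) ∈ Ω}

/-- `|x'| = √(x₁² + x₂²)` -/
def rho (x : V3) : ℝ := Real.sqrt ((x 0) ^ 2 + (x 1) ^ 2)

/-- the `x₃`-axis `{x' = 0}` -/
def axis3 : Set V3 := {x : V3 | x 0 = 0 ∧ x 1 = 0}

/-- `Ω_{a,b,R} = {a < x₃ < b, |x'| < R}` -/
def OmegaR (a b R : ℝ) : Set V3 := {x : V3 | a < x 2 ∧ x 2 < b ∧ rho x < R}

/-- build a point of `ℝ³` from `x' ∈ ℝ²` and `x₃ ∈ ℝ` -/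
def emb (y : V2) (t : ℝ) : V3 := (EuclideanSpace.equiv (Fin 3) ℝ).symm ![y 0, y 1, t]

/-- spherical component `u_r = u · e_r` -/
def uRc (u : V3 → V3) (x : V3) : ℝ := (u x 0 * x 0 + u x 1 * x 1 + u x 2 * x 2) / ‖x‖

/-- spherical component `u_θ = u · e_θ` -/
def uTc (u : V3 → V3) (x : V3) : ℝ :=
  (u x 0 * x 0 * x 2 + u x 1 * x 1 * x 2) / (‖x‖ * rho x) - u x 2 * rho x / ‖x‖

/-- spherical component `u_φ = u · e_φ` -/
def uPc (u : V3 → V3) (x : V3) : ℝ := (-(u x 0) * x 1 + u x 1 * x 0) / rho x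

/-- axisymmetry on a set: the spherical components are independent of the meridian angle -/
def AxisymOn (u : V3 → V3) (Ω : Set V3) : Prop :=
  ∀ x ∈ Ω, ∀ y ∈ Ω, ‖x‖ = ‖y‖ → x 2 = y 2 →
    uRc u x = uRc u y ∧ uTc u x = uTc u y ∧ uPc u x = uPc u y

/-- spherical frame vector `e_r` -/
def eRv (x : V3) : V3 := ‖x‖⁻¹ • x

/-- spherical frame vector `e_θ` -/
def eThv (x : V3) : V3 := (EuclideanSpace.equiv (Fin 3) ℝ).symm
  ![x 2 * x 0 / (‖x‖ * rho x), x 2 * x 1 / (‖x‖ * rho x), -(rho x) / ‖x‖]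

/-- spherical frame vector `e_φ` -/
def ePhv (x : V3) : V3 := (EuclideanSpace.equiv (Fin 3) ℝ).symm ![-(x 1) / rho x, x 0 / rho x, 0]

/-- the spherical cap `S² ∩ B_δ(S) \ {S}` -/
def NSCap (δ : ℝ) : Set V3 := (sphere2 ∩ Metric.ball S3 δ) \ {S3}

/-- the spherical cap `S² ∩ B_δ(S)` -/
def NSCapFull (δ : ℝ) : Set V3 := sphere2 ∩ Metric.ball S3 δ

open Asymptotics Bornology InnerProductSpace Laplacian Gradient

/-!
By homogeneity and axisymmetry, `u` is determined by its restriction to the meridian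
`{(1, 0, z)}`, where `z = cot θ`, and Euler's identity together with the infinitesimal rotation
turns the equations into ordinary differential equations in `z`. The swirl `g` satisfies a linear
first-order equation for `g'`, so it is monotone; as it vanishes at both ends, it is zero. Without
swirl the system has a Bernoulli integral and can be integrated twice more (Landau's
substitution). Decay at both ends leaves a single constant `γ`, common to the two poles,
in `u_r = γ + 2 z m - m² / 2` with `m = -u_θ`. L'Hôpital's rule applied to the resulting Riccati
equation gives `√(1 + z²) |m| ∼ |γ| |log sin θ|`, whence `|u| ∼ 2 |γ| |log sin θ|` at each pole.
-/

/-! ### Calculus on the real line -/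

theorem isLittleO_of_isLittleO_deriv_atTop {E : Type*} [NormedAddCommGroup E] [NormedSpace ℝ E]
    {F F' : ℝ → E} {G G' : ℝ → ℝ} (hF : ∀ᶠ z in atTop, HasDerivAt F (F' z) z)
    (hG : ∀ᶠ z in atTop, HasDerivAt G (G' z) z) (hG' : ∀ᶠ z in atTop, 0 ≤ G' z)
    (hGtop : Tendsto G atTop atTop) (h : F' =o[atTop] G') : F =o[atTop] G := by
  refine isLittleO_iff.2 fun ε hε => ?_
  obtain ⟨a, ha⟩ := eventually_atTop.1
    (((hF.and hG).and hG').and (isLittleO_iff.1 h (half_pos hε)))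
  have hgrowth : ∀ z ≥ a, ‖F z‖ ≤ ‖F a‖ + ε / 2 * (G z - G a) := fun z hz => by
    refine image_norm_le_of_norm_deriv_right_le_deriv_boundary' (f := F) (f' := F') (a := a)
      (b := z) (B := fun t => ‖F a‖ + ε / 2 * (G t - G a)) (B' := fun t => ε / 2 * G' t)
      (fun t ht => (ha t ht.1).1.1.1.continuousAt.continuousWithinAt)
      (fun t ht => (ha t ht.1).1.1.1.hasDerivWithinAt) (by simp)
      (fun t ht => ContinuousAt.continuousWithinAt ?_)
      (fun t ht => ((((ha t ht.1).1.1.2.sub_const _).const_mul _).const_add _).hasDerivWithinAt)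
      (fun t ht => ?_) ⟨hz, le_rfl⟩
    · exact ((((ha t ht.1).1.1.2.sub_const _).const_mul _).const_add _).continuousAt
    · simpa [abs_of_nonneg (ha t ht.1).1.2] using (ha t ht.1).2
  have hlarge := hGtop.eventually_ge_atTop (max 0 ((‖F a‖ - ε / 2 * G a) / (ε / 2)))
  filter_upwards [hlarge, eventually_ge_atTop a] with z hGz hz
  have hconst : ‖F a‖ - ε / 2 * G a ≤ G z * (ε / 2) :=
    (div_le_iff₀ (half_pos hε)).1 (le_of_max_le_right hGz)
  rw [Real.norm_of_nonneg (le_of_max_le_left hGz)]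
  linarith [hgrowth z hz]

theorem tendsto_div_of_tendsto_deriv_div_atTop {F F' G G' : ℝ → ℝ} {c : ℝ}
    (hF : ∀ᶠ z in atTop, HasDerivAt F (F' z) z) (hG : ∀ᶠ z in atTop, HasDerivAt G (G' z) z)
    (hG' : ∀ᶠ z in atTop, 0 < G' z) (hGtop : Tendsto G atTop atTop)
    (h : Tendsto (fun z => F' z / G' z) atTop (𝓝 c)) :
    Tendsto (fun z => F z / G z) atTop (𝓝 c) := by
  have hderiv : (fun z => F' z - c * G' z) =o[atTop] G' := by
    refine (isLittleO_iff_tendsto' (hG'.mono fun z hz h0 => absurd h0 hz.ne')).2 ?_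
    refine (sub_self c ▸ h.sub_const c).congr' ?_
    filter_upwards [hG'] with z hz
    field_simp
  have hsub : (fun z => F z - c * G z) =o[atTop] G := isLittleO_of_isLittleO_deriv_atTop
    (by filter_upwards [hF, hG] with z hFz hGz using hFz.sub (hGz.const_mul c)) hG
    (hG'.mono fun _ => le_of_lt) hGtop hderiv
  refine (zero_add c ▸ hsub.tendsto_div_nhds_zero.add_const c).congr' ?_
  filter_upwards [hGtop.eventually_gt_atTop 0] with z hz
  field_simp
  exact sub_add_cancel _ _

theorem exists_eq_const_of_hasDerivAt_zero {F : ℝ → ℝ} (hF : ∀ z, HasDerivAt F 0 z) :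
    ∃ c, ∀ z, F z = c :=
  ⟨F 0, fun z => is_const_of_deriv_eq_zero (fun z => (hF z).differentiableAt)
    (fun z => (hF z).deriv) z 0⟩

theorem eq_mul_exp_integral_of_hasDerivAt_mul {y a : ℝ → ℝ} (ha : Continuous a)
    (hy : ∀ z, HasDerivAt y (a z * y z) z) (z : ℝ) :
    y z = y 0 * rexp (∫ t in (0 : ℝ)..z, a t) := by
  have hprod : ∀ z, HasDerivAt (fun z => y z * rexp (-∫ t in (0 : ℝ)..z, a t)) 0 z := fun z => by
    refine ((hy z).mul (ha.integral_hasStrictDerivAt 0 z).hasDerivAt.neg.exp).congr_deriv ?_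
    ring
  obtain ⟨c, hc⟩ := exists_eq_const_of_hasDerivAt_zero hprod
  have hz := (hc z).trans (hc 0).symm
  simp only [intervalIntegral.integral_same, neg_zero, exp_zero, mul_one, exp_neg] at hz
  rw [← hz, inv_mul_cancel_right₀ (exp_pos _).ne']

theorem eq_zero_of_monotone_of_tendsto {g : ℝ → ℝ} (hg : Monotone g) (hbot : Tendsto g atBot (𝓝 0))
    (htop : Tendsto g atTop (𝓝 0)) (z : ℝ) : g z = 0 :=
  le_antisymm (hg.ge_of_tendsto htop z) (hg.le_of_tendsto hbot z)

theorem hasDerivAt_sqrt_one_add_sq (z : ℝ) :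
    HasDerivAt (fun z => √(1 + z ^ 2)) (z / √(1 + z ^ 2)) z := by
  refine (((hasDerivAt_pow 2 z).const_add 1).sqrt (by positivity)).congr_deriv ?_
  norm_num [mul_div_mul_left]

theorem hasDerivAt_div_sqrt_one_add_sq (z : ℝ) :
    HasDerivAt (fun z => z / √(1 + z ^ 2)) (1 / √(1 + z ^ 2) ^ 3) z := by
  have hpos : 0 < √(1 + z ^ 2) := by positivity
  refine ((hasDerivAt_id' z).div (hasDerivAt_sqrt_one_add_sq z) hpos.ne').congr_deriv ?_
  field_simp
  rw [Real.sq_sqrt (by positivity), add_sub_cancel_right]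

theorem tendsto_sqrt_one_add_sq_cobounded :
    Tendsto (fun z : ℝ => √(1 + z ^ 2)) (cobounded ℝ) atTop :=
  tendsto_atTop_mono (fun z => Real.abs_le_sqrt (by linarith : z ^ 2 ≤ 1 + z ^ 2))
    tendsto_norm_cobounded_atTop

theorem tendsto_div_sqrt_one_add_sq_atTop :
    Tendsto (fun z : ℝ => z / √(1 + z ^ 2)) atTop (𝓝 1) := by
  have hinv : Tendsto (fun z : ℝ => (√(1 + z⁻¹ ^ 2))⁻¹) atTop (𝓝 1) := by
    simpa using ((tendsto_inv_atTop_zero.pow 2).const_add (1 : ℝ)).sqrt.inv₀ (by simp)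
  refine hinv.congr' ?_
  filter_upwards [eventually_gt_atTop 0] with z hz
  have hfactor : √(1 + z ^ 2) = z * √(1 + z⁻¹ ^ 2) := by
    rw [← Real.sqrt_sq hz.le, ← Real.sqrt_mul (sq_nonneg z), Real.sqrt_sq hz.le]
    congr 1
    field_simp
    ring
  rw [hfactor, div_mul_cancel_left₀ hz.ne']

theorem tendsto_div_sqrt_one_add_sq_atBot :
    Tendsto (fun z : ℝ => z / √(1 + z ^ 2)) atBot (𝓝 (-1)) := by
  refine (tendsto_div_sqrt_one_add_sq_atTop.neg.comp tendsto_neg_atBot_atTop).congr fun z => ?_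
  simp [neg_div]

theorem hasDerivAt_deriv_of_contDiff_two {F : Type*} [NormedAddCommGroup F] [NormedSpace ℝ F]
    {f : ℝ → F} (hf : ContDiff ℝ 2 f) (z : ℝ) :
    HasDerivAt (deriv f) (deriv (deriv f) z) z :=
  ((contDiff_succ_iff_deriv (n := 1)).1 hf).2.2.differentiable_one.differentiableAt.hasDerivAt

theorem monotone_of_linear_ode {y a : ℝ → ℝ} (hy : Differentiable ℝ y) (ha : Continuous a)
    (hode : ∀ z, HasDerivAt (deriv y) (a z * deriv y z) z) (h0 : 0 ≤ deriv y 0) : Monotone y := by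
  refine monotone_of_deriv_nonneg hy fun z => ?_
  rw [eq_mul_exp_integral_of_hasDerivAt_mul ha hode z]
  positivity

theorem exists_eq_of_one_add_sq_mul_deriv_eq {y y' : ℝ → ℝ} {c : ℝ}
    (hy : ∀ z, HasDerivAt y (y' z) z) (hode : ∀ z, (1 + z ^ 2) * y' z = z * y z + c) :
    ∃ l, ∀ z, y z = l * √(1 + z ^ 2) + c * z := by
  have hderiv (z : ℝ) : HasDerivAt (fun z => y z / √(1 + z ^ 2) - c * (z / √(1 + z ^ 2))) 0 z := by
    have hpos : 0 < √(1 + z ^ 2) := by positivity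
    have hsq : √(1 + z ^ 2) ^ 2 = 1 + z ^ 2 := Real.sq_sqrt (by positivity)
    refine (((hy z).div (hasDerivAt_sqrt_one_add_sq z) hpos.ne').sub
      ((hasDerivAt_div_sqrt_one_add_sq z).const_mul c)).congr_deriv ?_
    field_simp
    linear_combination hode z + y' z * hsq
  obtain ⟨l, hl⟩ := exists_eq_const_of_hasDerivAt_zero hderiv
  refine ⟨l, fun z => ?_⟩
  rw [← hl z]
  field_simp
  ring

theorem exists_eq_of_one_add_sq_mul_deriv_eq_two_mul {y y' : ℝ → ℝ} {k l : ℝ}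
    (hy : ∀ z, HasDerivAt y (y' z) z)
    (hode : ∀ z, (1 + z ^ 2) * y' z = 2 * z * y z + (l * √(1 + z ^ 2) + 2 * k * z)) :
    ∃ d, ∀ z, y z
      = (1 + z ^ 2) * (k * (z / √(1 + z ^ 2)) ^ 2 + l * (z / √(1 + z ^ 2)) + d) := by
  have hderiv (z : ℝ) : HasDerivAt (fun z => y z / (1 + z ^ 2)
      - (k * (z / √(1 + z ^ 2)) ^ 2 + l * (z / √(1 + z ^ 2)))) 0 z := by
    have hpos : 0 < √(1 + z ^ 2) := by positivity
    have hsq : √(1 + z ^ 2) ^ 2 = 1 + z ^ 2 := Real.sq_sqrt (by positivity)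
    have hcos := hasDerivAt_div_sqrt_one_add_sq z
    refine (((hy z).div ((hasDerivAt_pow 2 z).const_add 1) (by positivity)).sub
      (((hcos.pow 2).const_mul k).add (hcos.const_mul l))).congr_deriv ?_
    have hodez := hode z
    generalize √(1 + z ^ 2) = s at hpos hsq hodez ⊢
    rw [← hsq] at hodez ⊢
    simp only [Nat.cast_ofNat, Nat.reduceSub, pow_one]
    field_simp
    linear_combination hodez
  obtain ⟨d, hd⟩ := exists_eq_const_of_hasDerivAt_zero hderiv
  refine ⟨d, fun z => ?_⟩
  rw [← hd z]
  field_simp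
  ring

/-! ### The profile of an axisymmetric solution -/

/-- The ordinary differential equations of an axisymmetric `(-1)`-homogeneous solution `(u, p)` in
the variable `z = cot θ`: on the unit sphere `f = u_r`, `m = -u_θ`, `u_φ = √(1 + z²) g` and
`P = p`. -/
structure IsConicalProfile (f m g P : ℝ → ℝ) : Prop where
  contDiff_radial : ContDiff ℝ 2 f
  differentiable_polar : Differentiable ℝ m
  contDiff_swirl : ContDiff ℝ 2 g
  differentiable_pressure : Differentiable ℝ P
  incompressible (z : ℝ) : (1 + z ^ 2) * deriv m z = z * m z - f z
  radial (z : ℝ) : (1 + z ^ 2) ^ 2 * deriv (deriv f) z + (1 + z ^ 2) * (z - m z) * deriv f z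
    + f z ^ 2 + m z ^ 2 + (1 + z ^ 2) * g z ^ 2 + 2 * P z = 0
  polar (z : ℝ) : deriv P z - deriv f z + m z * deriv m z + z * g z ^ 2 = 0
  azimuthal (z : ℝ) : (1 + z ^ 2) * deriv (deriv g) z + (3 * z - m z) * deriv g z = 0

namespace IsConicalProfile

variable {f m g P : ℝ → ℝ}

theorem swirl_eq_zero (h : IsConicalProfile f m g P) (hbot : Tendsto g atBot (𝓝 0))
    (htop : Tendsto g atTop (𝓝 0)) (z : ℝ) : g z = 0 := by
  have hg : Differentiable ℝ g := h.contDiff_swirl.differentiable two_ne_zero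
  have ha : Continuous fun z => (m z - 3 * z) / (1 + z ^ 2) :=
    (h.differentiable_polar.continuous.sub (by fun_prop)).div (by fun_prop) fun z => by positivity
  have hode (z : ℝ) : HasDerivAt (deriv g) ((m z - 3 * z) / (1 + z ^ 2) * deriv g z) z := by
    refine (hasDerivAt_deriv_of_contDiff_two h.contDiff_swirl z).congr_deriv ?_
    field_simp
    linear_combination h.azimuthal z
  rcases le_total 0 (deriv g 0) with h0 | h0
  · exact eq_zero_of_monotone_of_tendsto (monotone_of_linear_ode hg ha hode h0) hbot htop z
  · have hneg : deriv (-g) = -deriv g := by ext; simp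
    have hmono : Monotone (-g) := monotone_of_linear_ode hg.neg ha
      (fun z => by simpa [hneg] using (hode z).neg) (by simpa [hneg] using h0)
    exact neg_eq_zero.1 (eq_zero_of_monotone_of_tendsto hmono
      (neg_zero (G := ℝ) ▸ hbot.neg) (neg_zero (G := ℝ) ▸ htop.neg) z)

section NoSwirl

variable (h : IsConicalProfile f m (fun _ => 0) P)
include h

theorem hasDerivAt_radial (z : ℝ) : HasDerivAt f (deriv f z) z :=
  (h.contDiff_radial.differentiable two_ne_zero z).hasDerivAt

theorem exists_bernoulli : ∃ k, ∀ z, P z - f z + m z ^ 2 / 2 = k := by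
  refine exists_eq_const_of_hasDerivAt_zero fun z => ?_
  refine (((h.differentiable_pressure z).hasDerivAt.sub (h.hasDerivAt_radial z)).add
    (((h.differentiable_polar z).hasDerivAt.pow 2).div_const 2)).congr_deriv ?_
  linear_combination h.polar z

theorem exists_radial_first_integral :
    ∃ k l, ∀ z, (1 + z ^ 2) * deriv f z - m z * f z - 2 * m z
      = l * √(1 + z ^ 2) + 2 * k * z := by
  obtain ⟨k, hk⟩ := h.exists_bernoulli
  obtain ⟨l, hl⟩ := exists_eq_of_one_add_sq_mul_deriv_eq (c := -2 * k)
    (y := fun z => (1 + z ^ 2) * deriv f z - m z * f z - 2 * m z)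
    (fun z => ((((hasDerivAt_pow 2 z).const_add 1).mul
      (hasDerivAt_deriv_of_contDiff_two h.contDiff_radial z)).sub
      ((h.differentiable_polar z).hasDerivAt.mul (h.hasDerivAt_radial z))).sub
      ((h.differentiable_polar z).hasDerivAt.const_mul 2))
    (fun z => by
      linear_combination h.radial z - (f z + 2) * h.incompressible z - 2 * hk z)
  exact ⟨-k, l, fun z => by rw [hl]; ring⟩

theorem exists_radial_eq :
    ∃ k l d, ∀ z, f z - 2 * z * m z + m z ^ 2 / 2
      = (1 + z ^ 2) * (k * (z / √(1 + z ^ 2)) ^ 2 + l * (z / √(1 + z ^ 2)) + d) := by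
  obtain ⟨k, l, hkl⟩ := h.exists_radial_first_integral
  obtain ⟨d, hd⟩ := exists_eq_of_one_add_sq_mul_deriv_eq_two_mul (k := k) (l := l)
    (y := fun z => f z - 2 * z * m z + m z ^ 2 / 2)
    (fun z => ((h.hasDerivAt_radial z).sub (((hasDerivAt_id' z).const_mul 2).mul
      (h.differentiable_polar z).hasDerivAt)).add
      (((h.differentiable_polar z).hasDerivAt.pow 2).div_const 2))
    (fun z => by
      linear_combination hkl z + (m z - 2 * z) * h.incompressible z)
  exact ⟨k, l, d, hd⟩

/-- Sublinear growth at both ends kills two of the three integration constants: a quadratic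
polynomial in `cos θ` that vanishes at `±1` is a multiple of `sin² θ`. -/
theorem exists_radial_eq_of_isLittleO (hf : f =o[cobounded ℝ] id) (hm : m =o[cobounded ℝ] id) :
    ∃ γ, ∀ z, f z = γ + 2 * z * m z - m z ^ 2 / 2 := by
  obtain ⟨k, l, d, hY⟩ := h.exists_radial_eq
  have hsmall : Tendsto (fun z : ℝ => (f z - 2 * z * m z + m z ^ 2 / 2) / (1 + z ^ 2))
      (cobounded ℝ) (𝓝 0) := by
    have hlin : (id : ℝ → ℝ) =O[cobounded ℝ] fun z => 1 + z ^ 2 := .of_norm_le fun z => by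
      rw [id, Real.norm_eq_abs, abs_le]
      constructor <;> nlinarith
    have hsq : (fun z : ℝ => z * z) =O[cobounded ℝ] fun z => 1 + z ^ 2 := .of_norm_le fun z => by
      rw [Real.norm_of_nonneg (mul_self_nonneg z)]
      linarith
    refine IsLittleO.tendsto_div_nhds_zero (((hf.trans_isBigO hlin).sub ?_).add ?_)
    · simpa only [mul_assoc, id] using
        (((isBigO_refl id _).mul_isLittleO hm).trans_isBigO hsq).const_mul_left 2
    · simpa only [sq, div_eq_inv_mul] using ((hm.mul hm).trans_isBigO hsq).const_mul_left 2⁻¹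
  have hquad : Tendsto (fun z : ℝ => k * (z / √(1 + z ^ 2)) ^ 2 + l * (z / √(1 + z ^ 2)) + d)
      (cobounded ℝ) (𝓝 0) := hsmall.congr fun z => by
    rw [hY, mul_div_cancel_left₀ _ (by positivity)]
  rw [IsOrderBornology.cobounded_eq, tendsto_sup] at hquad
  have htop : k * 1 ^ 2 + l * 1 + d = 0 := tendsto_nhds_unique
    ((((tendsto_div_sqrt_one_add_sq_atTop.pow 2).const_mul k).add
      (tendsto_div_sqrt_one_add_sq_atTop.const_mul l)).add_const d) hquad.2
  have hbot : k * (-1) ^ 2 + l * (-1) + d = 0 := tendsto_nhds_unique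
    ((((tendsto_div_sqrt_one_add_sq_atBot.pow 2).const_mul k).add
      (tendsto_div_sqrt_one_add_sq_atBot.const_mul l)).add_const d) hquad.1
  refine ⟨d, fun z => ?_⟩
  have hl : l = 0 := by linarith
  have hk : k = -d := by linarith
  have hz := hY z
  rw [hl, hk, div_pow, Real.sq_sqrt (by positivity)] at hz
  have hsimp : (1 + z ^ 2) * (-d * (z ^ 2 / (1 + z ^ 2)) + 0 * (z / √(1 + z ^ 2)) + d) = d := by
    field_simp
    ring
  linarith

end NoSwirl
end IsConicalProfile

theorem tendsto_zero_of_radial_eq {f m : ℝ → ℝ} {γ : ℝ} (hf : f =o[atTop] id)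
    (hm : m =o[atTop] id) (hfm : ∀ z, f z = γ + 2 * z * m z - m z ^ 2 / 2) :
    Tendsto m atTop (𝓝 0) := by
  have hnum : Tendsto (fun z => f z / z - γ / z) atTop (𝓝 0) := by
    simpa using hf.tendsto_div_nhds_zero.sub (tendsto_const_nhds.div_atTop tendsto_id)
  have hden : Tendsto (fun z => 2 - m z / z / 2) atTop (𝓝 2) := by
    simpa using (hm.tendsto_div_nhds_zero.div_const 2).const_sub 2
  refine (zero_div (2 : ℝ) ▸ hnum.div hden two_ne_zero).congr' ?_
  filter_upwards [eventually_ne_atTop 0, hden.eventually_ne two_ne_zero] with z hz hz'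
  rw [Pi.div_apply, div_eq_iff hz', hfm]
  field_simp
  ring

/-- `m` solves a Riccati equation, `√(1 + z²) m` has derivative `(m² / 2 - γ) / √(1 + z²)`. -/
theorem tendsto_mul_div_log_of_radial_eq {f m : ℝ → ℝ} {γ : ℝ} (hm : Differentiable ℝ m)
    (hinc : ∀ z, (1 + z ^ 2) * deriv m z = z * m z - f z)
    (hfm : ∀ z, f z = γ + 2 * z * m z - m z ^ 2 / 2) (hm0 : Tendsto m atTop (𝓝 0)) :
    Tendsto (fun z => √(1 + z ^ 2) * m z / log √(1 + z ^ 2)) atTop (𝓝 (-γ)) := by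
  have htop : Tendsto (fun z : ℝ => √(1 + z ^ 2)) atTop atTop :=
    tendsto_sqrt_one_add_sq_cobounded.mono_left IsOrderBornology.atTop_le_cobounded
  have hratio : Tendsto (fun z => (m z ^ 2 / 2 - γ) / (z / √(1 + z ^ 2))) atTop (𝓝 (-γ)) := by
    simpa [Pi.div_def] using (((hm0.pow 2).div_const 2).sub_const γ).div
      tendsto_div_sqrt_one_add_sq_atTop one_ne_zero
  refine tendsto_div_of_tendsto_deriv_div_atTop
    (F' := fun z => (m z ^ 2 / 2 - γ) / √(1 + z ^ 2)) (G' := fun z => z / (1 + z ^ 2))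
    (.of_forall fun z => ?_) (.of_forall fun z => ?_) ?_
    (tendsto_log_atTop.comp htop) (hratio.congr' ?_)
  · have : 0 < √(1 + z ^ 2) := by positivity
    refine ((hasDerivAt_sqrt_one_add_sq z).mul (hm z).hasDerivAt).congr_deriv ?_
    field_simp
    rw [Real.sq_sqrt (by positivity)]
    linear_combination 2 * hinc z - 2 * hfm z
  · refine ((hasDerivAt_sqrt_one_add_sq z).log (by positivity)).congr_deriv ?_
    rw [div_div, Real.mul_self_sqrt (by positivity)]
  · filter_upwards [eventually_gt_atTop 0] with z hz
    positivity
  · filter_upwards [eventually_gt_atTop 0] with z hz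
    have : 0 < √(1 + z ^ 2) := by positivity
    nth_rw 3 [← Real.sq_sqrt (by positivity : 0 ≤ 1 + z ^ 2)]
    field_simp

theorem tendsto_sqrt_div_log_of_radial_eq {f m : ℝ → ℝ} {γ : ℝ} (hm : Differentiable ℝ m)
    (hinc : ∀ z, (1 + z ^ 2) * deriv m z = z * m z - f z)
    (hfm : ∀ z, f z = γ + 2 * z * m z - m z ^ 2 / 2) (hf0 : f =o[atTop] id)
    (hm0 : m =o[atTop] id) :
    Tendsto (fun z => √(f z ^ 2 + m z ^ 2) / log √(1 + z ^ 2)) atTop (𝓝 (2 * |γ|)) := by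
  have hσ : Tendsto (fun z : ℝ => √(1 + z ^ 2)) atTop atTop :=
    tendsto_sqrt_one_add_sq_cobounded.mono_left IsOrderBornology.atTop_le_cobounded
  have hlog : Tendsto (fun z : ℝ => log √(1 + z ^ 2)) atTop atTop := tendsto_log_atTop.comp hσ
  have hm_zero := tendsto_zero_of_radial_eq hf0 hm0 hfm
  have hmlog : Tendsto (fun z => m z / log √(1 + z ^ 2)) atTop (𝓝 0) := hm_zero.div_atTop hlog
  have hflog : Tendsto (fun z => f z / log √(1 + z ^ 2)) atTop (𝓝 (-(2 * γ))) := by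
    have hlim := ((tendsto_const_nhds (x := γ)).div_atTop hlog).add
      (((tendsto_div_sqrt_one_add_sq_atTop.const_mul 2).mul
        (tendsto_mul_div_log_of_radial_eq hm hinc hfm hm_zero)).sub
        ((hm_zero.mul hmlog).div_const 2))
    convert hlim using 2 with z
    · have : 0 < √(1 + z ^ 2) := by positivity
      rw [hfm]
      field_simp
      ring
    · ring
  have hnorm := ((hflog.pow 2).add (hmlog.pow 2)).sqrt
  rw [zero_pow two_ne_zero, add_zero, Real.sqrt_sq_eq_abs, abs_neg, abs_mul, abs_two] at hnorm
  refine hnorm.congr' ?_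
  filter_upwards [hlog.eventually_gt_atTop 0] with z hz
  rw [div_pow, div_pow, ← add_div, Real.sqrt_div' _ (sq_nonneg _), Real.sqrt_sq hz.le]

theorem IsConicalProfile.tendsto_norm_div_log {f m P : ℝ → ℝ}
    (h : IsConicalProfile f m (fun _ => 0) P)
    (hf : f =o[cobounded ℝ] id) (hm : m =o[cobounded ℝ] id) :
    ∃ L ≥ 0, Tendsto (fun z => √(f z ^ 2 + m z ^ 2) / log √(1 + z ^ 2)) (cobounded ℝ) (𝓝 L) := by
  obtain ⟨γ, hγ⟩ := h.exists_radial_eq_of_isLittleO hf hm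
  refine ⟨2 * |γ|, by positivity, ?_⟩
  rw [IsOrderBornology.cobounded_eq] at hf hm ⊢
  rw [isLittleO_sup] at hf hm
  refine .sup ?_ (tendsto_sqrt_div_log_of_radial_eq h.differentiable_polar h.incompressible hγ
    hf.2 hm.2)
  have hreflect : Tendsto (fun z => √(f (-z) ^ 2 + (-m (-z)) ^ 2) / log √(1 + z ^ 2)) atTop
      (𝓝 (2 * |γ|)) := by
    refine tendsto_sqrt_div_log_of_radial_eq (f := fun z => f (-z)) (m := fun z => -m (-z))
      (h.differentiable_polar.comp differentiable_neg).neg (fun z => ?_) (fun z => ?_) ?_ ?_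
    · simp only [deriv.fun_neg, deriv_comp_neg]
      linear_combination h.incompressible (-z)
    · linear_combination hγ (-z)
    · simpa [Function.comp_def, Function.id_def] using
        (hf.1.comp_tendsto tendsto_neg_atTop_atBot).neg_right
    · simpa [Function.comp_def, Function.id_def] using
        (hm.1.comp_tendsto tendsto_neg_atTop_atBot).neg_right
  exact (hreflect.comp tendsto_neg_atBot_atTop).congr fun z => by simp

/-! ### Homogeneous and equivariant vector fields -/

theorem fderiv_apply_self_of_zpow_homogeneous {E F : Type*} [NormedAddCommGroup E]
    [NormedSpace ℝ E] [NormedAddCommGroup F] [NormedSpace ℝ F] {u : E → F} {x : E} {n : ℤ}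
    (hu : DifferentiableAt ℝ u x) (hhom : ∀ c : ℝ, 0 < c → u (c • x) = c ^ n • u x) :
    fderiv ℝ u x x = (n : ℝ) • u x := by
  have hleft : HasDerivAt (fun c : ℝ => u (c • x)) (fderiv ℝ u x x) 1 := by
    have hscale : HasDerivAt (fun c : ℝ => c • x) x 1 := by
      simpa using (hasDerivAt_id (1 : ℝ)).smul_const x
    exact HasFDerivAt.comp_hasDerivAt_of_eq 1 hu.hasFDerivAt hscale (one_smul ℝ x).symm
  have hright : HasDerivAt (fun c : ℝ => c ^ n • u x) ((n : ℝ) • u x) 1 := by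
    simpa using (hasDerivAt_zpow n (1 : ℝ) (.inl one_ne_zero)).smul_const (u x)
  exact hleft.unique (hright.congr_of_eventuallyEq
    ((eventually_gt_nhds one_pos).mono fun c hc => hhom c hc))

theorem fderiv_fderiv_apply_of_fderiv_apply_eq {E F : Type*} [NormedAddCommGroup E]
    [NormedSpace ℝ E] [NormedAddCommGroup F] [NormedSpace ℝ F] {u : E → F} {x : E}
    {A : E →L[ℝ] E} {B : F →L[ℝ] F} (hu : ContDiffAt ℝ 2 u x)
    (hAB : ∀ᶠ y in 𝓝 x, fderiv ℝ u y (A y) = B (u y)) (v : E) :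
    fderiv ℝ (fderiv ℝ u) x v (A x) = B (fderiv ℝ u x v) - fderiv ℝ u x (A v) := by
  have hu' : HasFDerivAt (fderiv ℝ u) (fderiv ℝ (fderiv ℝ u) x) x :=
    ((hu.fderiv_right (m := 1) le_rfl).differentiableAt one_ne_zero).hasFDerivAt
  have hleft := hu'.clm_apply (A.hasFDerivAt (x := x))
  have hright := (B.hasFDerivAt (x := u x)).comp x (hu.differentiableAt two_ne_zero).hasFDerivAt
  have heq := DFunLike.congr_fun (hleft.unique (hright.congr_of_eventuallyEq hAB)) v
  simp only [_root_.add_apply, ContinuousLinearMap.comp_apply,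
    ContinuousLinearMap.flip_apply] at heq
  rw [← heq, add_sub_cancel_left]

theorem laplacian_comp_linearIsometryEquiv {E F : Type*} [NormedAddCommGroup E]
    [InnerProductSpace ℝ E] [FiniteDimensional ℝ E] [NormedAddCommGroup F] [NormedSpace ℝ F]
    (R : E ≃ₗᵢ[ℝ] E) (u : E → F) (x : E) : Δ (u ∘ R) x = Δ u (R x) := by
  have hiter : iteratedFDeriv ℝ 2 (u ∘ R) x
      = (iteratedFDeriv ℝ 2 u (R x)).compContinuousLinearMap fun _ =>
        (R.toContinuousLinearEquiv : E →L[ℝ] E) := by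
    have hwithin := R.toContinuousLinearEquiv.iteratedFDerivWithin_comp_right u
      uniqueDiffOn_univ (Set.mem_univ (R x)) 2
    rwa [Set.preimage_univ, iteratedFDerivWithin_univ, iteratedFDerivWithin_univ] at hwithin
  simp only [laplacian_eq_iteratedFDeriv_stdOrthonormalBasis (u ∘ R),
    laplacian_eq_iteratedFDeriv_orthonormalBasis u ((stdOrthonormalBasis ℝ E).map R), hiter]
  refine Finset.sum_congr rfl fun i _ => ?_
  rw [ContinuousMultilinearMap.compContinuousLinearMap_apply]
  congr 1
  ext j
  fin_cases j <;> rfl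

theorem laplacian_equivariant {E : Type*} [NormedAddCommGroup E] [InnerProductSpace ℝ E]
    [FiniteDimensional ℝ E] (R : E ≃ₗᵢ[ℝ] E) {u : E → E} {x : E}
    (hequi : u ∘ R =ᶠ[𝓝 x] R ∘ u) : Δ u (R x) = R (Δ u x) := by
  rw [← laplacian_comp_linearIsometryEquiv, (laplacian_congr_nhds hequi).eq_of_nhds]
  exact congrFun (laplacian_CLE_comp_left (l := R.toContinuousLinearEquiv)) x

theorem fderiv_equivariant {E : Type*} [NormedAddCommGroup E] [NormedSpace ℝ E]
    (R : E ≃ₗᵢ[ℝ] E) {u : E → E} {x : E} (hequi : u ∘ R =ᶠ[𝓝 x] R ∘ u) (v : E) :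
    fderiv ℝ u (R x) (R v) = R (fderiv ℝ u x v) := by
  have hcomp : fderiv ℝ (u ∘ R) x = (R : E →L[ℝ] E) ∘L fderiv ℝ u x :=
    hequi.fderiv_eq.trans R.comp_fderiv
  have hright : fderiv ℝ (u ∘ R) x = fderiv ℝ u (R x) ∘L (R : E →L[ℝ] E) :=
    R.toContinuousLinearEquiv.comp_right_fderiv
  exact DFunLike.congr_fun (hright.symm.trans hcomp) v

theorem gradient_equivariant_of_momentum {E : Type*} [NormedAddCommGroup E]
    [InnerProductSpace ℝ E] [FiniteDimensional ℝ E] (R : E ≃ₗᵢ[ℝ] E) {u : E → E} {p : E → ℝ}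
    {x : E} (hequi : u ∘ R =ᶠ[𝓝 x] R ∘ u) (hx : -Δ u x + fderiv ℝ u x (u x) + ∇ p x = 0)
    (hRx : -Δ u (R x) + fderiv ℝ u (R x) (u (R x)) + ∇ p (R x) = 0) :
    ∇ p (R x) = R (∇ p x) := by
  have hu : u (R x) = R (u x) := hequi.eq_of_nhds
  rw [laplacian_equivariant R hequi, hu, fderiv_equivariant R hequi] at hRx
  have hmap := congrArg R hx
  rw [map_add, map_add, map_neg, map_zero] at hmap
  exact add_left_cancel (hRx.trans hmap.symm)

/-! ### Rotations about the axis and the meridian -/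

/-- The rotation of `ℝ³` by the angle `θ` about the `x₃`-axis. -/
def rotZ (θ : ℝ) : V3 ≃ₗᵢ[ℝ] V3 :=
  LinearIsometry.toLinearIsometryEquiv
    { toLinearMap := Matrix.toEuclideanLin !![cos θ, -sin θ, 0; sin θ, cos θ, 0; 0, 0, 1]
      norm_map' := fun x => by
        simp only [EuclideanSpace.norm_eq, Matrix.toLpLin_apply, Matrix.mulVec, dotProduct,
          Fin.sum_univ_three, Real.norm_eq_abs, sq_abs]
        congr 1
        simp
        linear_combination (x 0 ^ 2 + x 1 ^ 2) * Real.sin_sq_add_cos_sq θ }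
    rfl

/-- The infinitesimal generator `(x₁, x₂, x₃) ↦ (-x₂, x₁, 0)` of the rotations `rotZ`. -/
def rotGen : V3 →L[ℝ] V3 :=
  LinearMap.toContinuousLinearMap (Matrix.toEuclideanLin !![0, -1, 0; 1, 0, 0; 0, 0, 0])

/-- The point of the half-plane `{x₂ = 0, x₁ > 0}` at unit distance from the axis and height `z`. -/
def meridianPt (z : ℝ) : V3 := e3 0 + z • e3 2

theorem rotZ_apply (θ : ℝ) (x : V3) :
    rotZ θ x = !₂[cos θ * x 0 - sin θ * x 1, sin θ * x 0 + cos θ * x 1, x 2] := by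
  ext i
  fin_cases i <;> simp [rotZ, Matrix.toLpLin_apply, dotProduct, Fin.sum_univ_three]
  ring

theorem rotGen_apply (x : V3) : rotGen x = !₂[-x 1, x 0, 0] := by
  ext i
  fin_cases i <;>
    simp [rotGen, Matrix.toLpLin_apply, dotProduct, Fin.sum_univ_three]

theorem meridianPt_eq (z : ℝ) : meridianPt z = !₂[1, 0, z] := by
  ext i
  fin_cases i <;> simp [meridianPt, e3]

theorem hasDerivAt_rotZ_apply (θ : ℝ) (x : V3) :
    HasDerivAt (fun θ => rotZ θ x) (rotGen (rotZ θ x)) θ := by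
  have hsplit : (fun θ => rotZ θ x) = fun θ =>
      cos θ • !₂[x 0, x 1, 0] + sin θ • !₂[-x 1, x 0, 0] + !₂[0, 0, x 2] := by
    ext t i
    fin_cases i <;> simp [rotZ_apply]
    · ring
    · ring
  rw [hsplit]
  refine ((((hasDerivAt_cos θ).smul_const _).add ((hasDerivAt_sin θ).smul_const _)).add_const
    _).congr_deriv ?_
  ext i
  fin_cases i <;> simp [rotZ_apply, rotGen_apply] <;> ring

theorem rotGen_rotZ (θ : ℝ) (x : V3) : rotGen (rotZ θ x) = rotZ θ (rotGen x) := by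
  ext i
  fin_cases i <;> simp [rotZ_apply, rotGen_apply] <;> ring

theorem rotZ_zero (x : V3) : rotZ 0 x = x := by
  ext i
  fin_cases i <;> simp [rotZ_apply]

theorem rho_sq (x : V3) : rho x ^ 2 = x 0 ^ 2 + x 1 ^ 2 := Real.sq_sqrt (by positivity)

theorem rho_rotZ (θ : ℝ) (x : V3) : rho (rotZ θ x) = rho x := by
  simp only [rho, rotZ_apply]
  congr 1
  simp
  linear_combination (x 0 ^ 2 + x 1 ^ 2) * Real.sin_sq_add_cos_sq θ

theorem rho_smul {c : ℝ} (hc : 0 ≤ c) (x : V3) : rho (c • x) = c * rho x := by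
  rw [rho, rho, ← Real.sqrt_sq hc, ← Real.sqrt_mul (sq_nonneg c), Real.sqrt_sq hc]
  simp
  ring_nf

theorem rho_meridianPt (z : ℝ) : rho (meridianPt z) = 1 := by
  simp [rho, meridianPt_eq]

theorem norm_sq_eq_rho_sq_add (x : V3) : ‖x‖ ^ 2 = rho x ^ 2 + x 2 ^ 2 := by
  rw [EuclideanSpace.norm_sq_eq, Fin.sum_univ_three, rho_sq]
  simp

theorem rho_pos_iff {x : V3} : 0 < rho x ↔ x ∈ axis3ᶜ := by
  rw [Set.mem_compl_iff, show x ∈ axis3 ↔ x 0 = 0 ∧ x 1 = 0 from Iff.rfl, rho, Real.sqrt_pos,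
    (by positivity : 0 ≤ x 0 ^ 2 + x 1 ^ 2).lt_iff_ne', Ne,
    add_eq_zero_iff_of_nonneg (sq_nonneg _) (sq_nonneg _), sq_eq_zero_iff, sq_eq_zero_iff]

theorem continuous_rho : Continuous rho := by
  unfold rho
  fun_prop

theorem isOpen_compl_axis3 : IsOpen axis3ᶜ := by
  simp_rw [← Set.ext fun x => rho_pos_iff (x := x)]
  exact isOpen_lt continuous_const continuous_rho

theorem smul_mem_compl_axis3 {x : V3} {c : ℝ} (hc : 0 < c) (hx : x ∈ axis3ᶜ) :
    c • x ∈ axis3ᶜ := by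
  rw [← rho_pos_iff] at hx ⊢
  rw [rho_smul hc.le]
  positivity

theorem sphere2_diff_poles : sphere2 \ {S3, N3} = sphere2 ∩ axis3ᶜ := by
  refine Set.ext fun x => and_congr_right fun hx => not_congr ⟨?_, fun ⟨h0, h1⟩ => ?_⟩
  · rintro (rfl | rfl) <;> simp [axis3, S3, N3]
  · have hnorm : x 2 ^ 2 = 1 := by
      simpa [mem_sphere_zero_iff_norm.1 hx, rho_sq, h0, h1] using (norm_sq_eq_rho_sq_add x).symm
    refine (sq_eq_one_iff.1 hnorm).symm.imp (fun h2 => ?_) fun h2 => ?_ <;>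
    · ext i
      fin_cases i <;> simp [S3, N3, h0, h1, h2]

theorem cone3_sphere2_diff_poles : cone3 (sphere2 \ {S3, N3}) = axis3ᶜ := by
  rw [sphere2_diff_poles]
  ext x
  constructor
  · rintro ⟨hx, -, haxis⟩
    simpa [hx] using smul_mem_compl_axis3 (norm_pos_iff.2 hx) haxis
  · intro haxis
    have hx : x ≠ 0 := fun h0 => haxis (by simp [h0, axis3])
    exact ⟨hx, by simp [sphere2, norm_smul, hx],
      smul_mem_compl_axis3 (inv_pos.2 (norm_pos_iff.2 hx)) haxis⟩

theorem rotZ_mem_compl_axis3 (θ : ℝ) {x : V3} (hx : x ∈ axis3ᶜ) : rotZ θ x ∈ axis3ᶜ := by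
  rwa [← rho_pos_iff, rho_rotZ, rho_pos_iff]

theorem meridianPt_mem_compl_axis3 (z : ℝ) : meridianPt z ∈ axis3ᶜ :=
  rho_pos_iff.1 (by simp [rho_meridianPt])

theorem eq_rho_smul_rotZ_meridianPt {x : V3} (hx : x ∈ axis3ᶜ) :
    x = rho x • rotZ (Complex.arg ⟨x 0, x 1⟩) (meridianPt (x 2 / rho x)) := by
  have hρ : rho x = ‖(⟨x 0, x 1⟩ : ℂ)‖ := by
    rw [Complex.norm_def, Complex.normSq_mk, rho, sq, sq]
  have hpos : 0 < rho x := rho_pos_iff.2 hx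
  ext i
  fin_cases i
  · simp [rotZ_apply, meridianPt_eq, hρ, Complex.norm_mul_cos_arg]
  · simp [rotZ_apply, meridianPt_eq, hρ, Complex.norm_mul_sin_arg]
  · simp [rotZ_apply, meridianPt_eq, mul_div_cancel₀ _ hpos.ne']

/-! ### Axisymmetric fields -/

theorem eq_sum_spherical_frame (u : V3 → V3) {x : V3} (hx : x ∈ axis3ᶜ) :
    u x = uRc u x • eRv x + uTc u x • eThv x + uPc u x • ePhv x := by
  have hρ : 0 < rho x := rho_pos_iff.2 hx
  have hsq := rho_sq x
  have hnorm := norm_sq_eq_rho_sq_add x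
  have hpos : 0 < ‖x‖ := by nlinarith [norm_nonneg x, sq_nonneg (x 2)]
  ext i
  fin_cases i <;> simp [uRc, uTc, uPc, eRv, eThv, ePhv] <;> field_simp
  · linear_combination
      ‖x‖ ^ 2 * u x 0 * hsq + x 0 * (u x 0 * x 0 + u x 1 * x 1) * hnorm
  · linear_combination
      ‖x‖ ^ 2 * u x 1 * hsq + x 1 * (u x 0 * x 0 + u x 1 * x 1) * hnorm
  · linear_combination u x 2 * hnorm

theorem eRv_rotZ (θ : ℝ) (x : V3) : eRv (rotZ θ x) = rotZ θ (eRv x) := by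
  rw [eRv, eRv, map_smul, LinearIsometryEquiv.norm_map]

theorem eThv_rotZ (θ : ℝ) (x : V3) : eThv (rotZ θ x) = rotZ θ (eThv x) := by
  ext i
  fin_cases i <;> simp [eThv, rho_rotZ] <;> simp [rotZ_apply] <;> ring

theorem ePhv_rotZ (θ : ℝ) (x : V3) : ePhv (rotZ θ x) = rotZ θ (ePhv x) := by
  ext i
  fin_cases i <;> simp [ePhv, rho_rotZ] <;> simp [rotZ_apply] <;> ring

theorem AxisymOn.map_rotZ {u : V3 → V3} (h : AxisymOn u axis3ᶜ) (θ : ℝ) {x : V3}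
    (hx : x ∈ axis3ᶜ) : u (rotZ θ x) = rotZ θ (u x) := by
  have hθ := rotZ_mem_compl_axis3 θ hx
  obtain ⟨hR, hT, hP⟩ := h _ hθ _ hx ((rotZ θ).norm_map x) (by simp [rotZ_apply])
  rw [eq_sum_spherical_frame u hθ, eq_sum_spherical_frame u hx, hR, hT, hP, eRv_rotZ, eThv_rotZ,
    ePhv_rotZ]
  simp only [map_add, map_smul]

/-! ### The Navier–Stokes system on the meridian -/

theorem pd_apply_eq_fderiv {u : V3 → V3} {x : V3} (hu : DifferentiableAt ℝ u x) (i j : Fin 3) :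
    pd j (fun y => u y i) x = fderiv ℝ u x (e3 j) i :=
  DFunLike.congr_fun ((EuclideanSpace.proj (𝕜 := ℝ) i).hasFDerivAt.comp x hu.hasFDerivAt).fderiv
    (e3 j)

theorem laplacian_eq_sum_fderiv_fderiv (u : V3 → V3) (x : V3) :
    Δ u x = ∑ j, fderiv ℝ (fderiv ℝ u) x (e3 j) (e3 j) := by
  simp [laplacian_eq_iteratedFDeriv_orthonormalBasis u (EuclideanSpace.basisFun (Fin 3) ℝ),
    iteratedFDeriv_two_apply, e3]

theorem lap3_apply_eq_laplacian {u : V3 → V3} {x : V3} (hu : ContDiffAt ℝ 2 u x) (i : Fin 3) :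
    lap3 (fun y => u y i) x = Δ u x i := by
  have hu' : DifferentiableAt ℝ (fderiv ℝ u) x :=
    (hu.fderiv_right (m := 1) le_rfl).differentiableAt one_ne_zero
  have hpd (j : Fin 3) :
      (fun y => pd j (fun z => u z i) y) =ᶠ[𝓝 x] fun y => fderiv ℝ u y (e3 j) i :=
    (hu.eventually (by simp)).mono fun y hy =>
      pd_apply_eq_fderiv (hy.differentiableAt two_ne_zero) i j
  rw [lap3, laplacian_eq_sum_fderiv_fderiv, WithLp.ofLp_sum, Finset.sum_apply]
  refine Finset.sum_congr rfl fun j _ => ?_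
  rw [pd, (hpd j).fderiv_eq, ← pd, pd_apply_eq_fderiv (hu'.clm_apply (differentiableAt_const _))]
  rw [fderiv_clm_apply hu' (differentiableAt_const _)]
  simp

theorem gradient_apply (p : V3 → ℝ) (x : V3) (i : Fin 3) : ∇ p x i = pd i p x := by
  rw [pd, ← inner_gradient_left, e3, EuclideanSpace.inner_single_right]
  simp

theorem sum_smul_e3 (v : V3) : ∑ j, v j • e3 j = v := by
  simpa [e3] using (EuclideanSpace.basisFun (Fin 3) ℝ).sum_repr v

theorem NSEq.momentum {u : V3 → V3} {p : V3 → ℝ} {x : V3} (h : NSEq u p x)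
    (hu : ContDiffAt ℝ 2 u x) : -Δ u x + fderiv ℝ u x (u x) + ∇ p x = 0 := by
  ext i
  have hconv : fderiv ℝ u x (u x) i = ∑ j, u x j * pd j (fun z => u z i) x := by
    conv_lhs => rw [← sum_smul_e3 (u x)]
    simp [pd_apply_eq_fderiv (hu.differentiableAt two_ne_zero)]
  simpa [← lap3_apply_eq_laplacian hu, gradient_apply, hconv] using h.1 i

theorem NSEq.div {u : V3 → V3} {p : V3 → ℝ} {x : V3} (h : NSEq u p x)
    (hu : DifferentiableAt ℝ u x) : ∑ j, fderiv ℝ u x (e3 j) j = 0 := by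
  simpa only [pd_apply_eq_fderiv hu] using h.2

/-- An axisymmetric `(-1)`-homogeneous solution of the Navier–Stokes equations off the axis, with
its `(-2)`-homogeneous pressure. -/
structure IsConicalSolution (u : V3 → V3) (p : V3 → ℝ) : Prop where
  velocity_smul : ∀ x ∈ axis3ᶜ, ∀ c : ℝ, 0 < c → u (c • x) = c⁻¹ • u x
  pressure_smul : ∀ x ∈ axis3ᶜ, ∀ c : ℝ, 0 < c → p (c • x) = (c ^ 2)⁻¹ * p x
  contDiffOn : ContDiffOn ℝ 2 u axis3ᶜ
  differentiableOn_pressure : DifferentiableOn ℝ p axis3ᶜ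
  axisymOn : AxisymOn u axis3ᶜ
  nsEq : ∀ x ∈ axis3ᶜ, NSEq u p x

namespace IsConicalSolution

variable {u : V3 → V3} {p : V3 → ℝ} (h : IsConicalSolution u p)
include h

theorem contDiffAt {x : V3} (hx : x ∈ axis3ᶜ) : ContDiffAt ℝ 2 u x :=
  h.contDiffOn.contDiffAt (isOpen_compl_axis3.mem_nhds hx)

theorem differentiableAt {x : V3} (hx : x ∈ axis3ᶜ) : DifferentiableAt ℝ u x :=
  (h.contDiffAt hx).differentiableAt two_ne_zero

theorem differentiableAt_pressure {x : V3} (hx : x ∈ axis3ᶜ) : DifferentiableAt ℝ p x :=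
  h.differentiableOn_pressure.differentiableAt (isOpen_compl_axis3.mem_nhds hx)

theorem comp_rotZ_eventuallyEq (θ : ℝ) {x : V3} (hx : x ∈ axis3ᶜ) :
    u ∘ rotZ θ =ᶠ[𝓝 x] rotZ θ ∘ u :=
  (isOpen_compl_axis3.eventually_mem hx).mono fun _ hy => h.axisymOn.map_rotZ θ hy

theorem fderiv_apply_self {x : V3} (hx : x ∈ axis3ᶜ) : fderiv ℝ u x x = -u x := by
  simpa using fderiv_apply_self_of_zpow_homogeneous (n := -1) (h.differentiableAt hx)
    fun c hc => by simpa using h.velocity_smul x hx c hc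

theorem fderiv_pressure_apply_self {x : V3} (hx : x ∈ axis3ᶜ) : fderiv ℝ p x x = -2 * p x := by
  simpa using fderiv_apply_self_of_zpow_homogeneous (n := -2) (h.differentiableAt_pressure hx)
    fun c hc => by simpa using h.pressure_smul x hx c hc

theorem fderiv_rotGen {x : V3} (hx : x ∈ axis3ᶜ) : fderiv ℝ u x (rotGen x) = rotGen (u x) := by
  have hrot (y : V3) : HasDerivAt (fun θ => rotZ θ y) (rotGen y) 0 := by
    simpa only [rotZ_zero] using hasDerivAt_rotZ_apply 0 y
  have hleft : HasDerivAt (fun θ => u (rotZ θ x)) (fderiv ℝ u x (rotGen x)) 0 :=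
    (h.differentiableAt hx).hasFDerivAt.comp_hasDerivAt_of_eq 0 (hrot x) (rotZ_zero x).symm
  exact hleft.unique ((hrot (u x)).congr_of_eventuallyEq
    (.of_forall fun θ => h.axisymOn.map_rotZ θ hx))

/-- Along a circle around the axis `p` has constant angular derivative, hence is constant because
the circle closes up. -/
theorem fderiv_pressure_rotGen {x : V3} (hx : x ∈ axis3ᶜ) : fderiv ℝ p x (rotGen x) = 0 := by
  have hderiv (θ : ℝ) : HasDerivAt (fun θ => p (rotZ θ x)) (fderiv ℝ p x (rotGen x)) θ := by
    have hθ := rotZ_mem_compl_axis3 θ hx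
    have hgrad := gradient_equivariant_of_momentum (rotZ θ) (h.comp_rotZ_eventuallyEq θ hx)
      ((h.nsEq x hx).momentum (h.contDiffAt hx)) ((h.nsEq _ hθ).momentum (h.contDiffAt hθ))
    refine ((h.differentiableAt_pressure hθ).hasFDerivAt.comp_hasDerivAt θ
      (hasDerivAt_rotZ_apply θ x)).congr_deriv ?_
    rw [rotGen_rotZ, ← inner_gradient_left, hgrad, LinearIsometryEquiv.inner_map_map,
      inner_gradient_left]
  have hperiodic : rotZ (2 * π) x = rotZ 0 x := by simp [rotZ_apply]
  obtain ⟨_, -, hzero⟩ := exists_hasDerivAt_eq_zero Real.two_pi_pos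
    (fun θ _ => (hderiv θ).continuousAt.continuousWithinAt) (by rw [hperiodic])
    fun θ _ => hderiv θ
  exact hzero

end IsConicalSolution

section Cartesian

variable {a c : ℝ → ℝ} (ha : ContDiff ℝ 2 a) (hc : Differentiable ℝ c)
  (hdiv : ∀ z, deriv c z = z * deriv a z)
include ha hdiv

theorem deriv_deriv_of_deriv_eq_mul (z : ℝ) :
    deriv (deriv c) z = deriv a z + z * deriv (deriv a) z := by
  have hmul : HasDerivAt (fun z => z * deriv a z) (deriv a z + z * deriv (deriv a) z) z :=
    ((hasDerivAt_id' z).mul (hasDerivAt_deriv_of_contDiff_two ha z)).congr_deriv (by ring)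
  rw [funext hdiv, hmul.deriv]

include hc

theorem deriv_radial_eq :
    deriv (fun z => a z + z * c z) = fun z => (1 + z ^ 2) * deriv a z + c z :=
  deriv_eq fun z => ((ha.differentiable two_ne_zero z).hasDerivAt.add
    ((hasDerivAt_id' z).mul (hc z).hasDerivAt)).congr_deriv (by linear_combination z * hdiv z)

theorem deriv_deriv_radial_eq (z : ℝ) :
    deriv (deriv fun z => a z + z * c z) z
      = 3 * z * deriv a z + (1 + z ^ 2) * deriv (deriv a) z := by
  rw [deriv_radial_eq ha hc hdiv]
  refine (((((hasDerivAt_pow 2 z).const_add 1).mul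
    (hasDerivAt_deriv_of_contDiff_two ha z)).add (hc z).hasDerivAt).congr_deriv ?_).deriv
  simp only [Nat.cast_ofNat, Nat.reduceSub, pow_one]
  linear_combination hdiv z

theorem deriv_polar_eq (z : ℝ) : deriv (fun z => c z - z * a z) z = -a z :=
  (((hc z).hasDerivAt.sub ((hasDerivAt_id' z).mul
    (ha.differentiable two_ne_zero z).hasDerivAt)).congr_deriv
    (by linear_combination hdiv z)).deriv

end Cartesian

theorem isConicalProfile_of_cartesian {a b c q : ℝ → ℝ} (ha : ContDiff ℝ 2 a)
    (hb : ContDiff ℝ 2 b) (hc : ContDiff ℝ 2 c) (hq : Differentiable ℝ q)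
    (hdiv : ∀ z, deriv c z = z * deriv a z)
    (hmom₀ : ∀ z, -((1 + z ^ 2) * deriv (deriv a) z + 3 * z * deriv a z)
      + (c z - z * a z) * deriv a z - a z ^ 2 - b z ^ 2 - 2 * q z - z * deriv q z = 0)
    (hmom₁ : ∀ z, -((1 + z ^ 2) * deriv (deriv b) z + 3 * z * deriv b z)
      + (c z - z * a z) * deriv b z = 0)
    (hmom₂ : ∀ z, -((1 + z ^ 2) * deriv (deriv c) z + 3 * z * deriv c z + c z)
      + (c z - z * a z) * deriv c z - a z * c z + deriv q z = 0) :
    IsConicalProfile (fun z => a z + z * c z) (fun z => c z - z * a z) b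
      (fun z => (1 + z ^ 2) * q z) := by
  have hc' : Differentiable ℝ c := hc.differentiable two_ne_zero
  have hP (z : ℝ) : deriv (fun z => (1 + z ^ 2) * q z) z
      = 2 * z * q z + (1 + z ^ 2) * deriv q z :=
    ((((hasDerivAt_pow 2 z).const_add 1).mul (hq z).hasDerivAt).congr_deriv (by simp)).deriv
  have hmom₂' (z : ℝ) := hmom₂ z
  simp only [deriv_deriv_of_deriv_eq_mul ha hdiv, hdiv] at hmom₂'
  refine ⟨by fun_prop, by fun_prop (disch := norm_num), hb, by fun_prop, fun z => ?_, fun z => ?_,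
    fun z => ?_, fun z => ?_⟩
  · rw [deriv_polar_eq ha hc' hdiv]
    ring
  · rw [deriv_deriv_radial_eq ha hc' hdiv, deriv_radial_eq ha hc' hdiv]
    linear_combination -(1 + z ^ 2) * hmom₀ z - z * (1 + z ^ 2) * hmom₂' z
  · rw [hP, deriv_radial_eq ha hc' hdiv, deriv_polar_eq ha hc' hdiv]
    linear_combination hmom₂' z - z * hmom₀ z
  · linear_combination -hmom₁ z

theorem e3_zero_eq_sub (z : ℝ) : e3 0 = meridianPt z - z • e3 2 := by
  rw [meridianPt, add_sub_cancel_right]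

theorem e3_one_eq_rotGen (z : ℝ) : e3 1 = rotGen (meridianPt z) := by
  ext i
  fin_cases i <;> simp [e3, rotGen_apply, meridianPt_eq]

theorem rotGen_e3_one : rotGen (e3 1) = -e3 0 := by
  ext i
  fin_cases i <;> simp [e3, rotGen_apply]

theorem hasDerivAt_meridianPt (z : ℝ) : HasDerivAt meridianPt (e3 2) z :=
  (((hasDerivAt_id' z).smul_const (e3 2)).const_add (e3 0)).congr_deriv (one_smul ℝ _)

theorem contDiff_meridianPt : ContDiff ℝ 2 meridianPt := by
  unfold meridianPt
  fun_prop

theorem deriv_comp_meridianPt {F : Type*} [NormedAddCommGroup F] [NormedSpace ℝ F] {u : V3 → F}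
    {z : ℝ} (hu : DifferentiableAt ℝ u (meridianPt z)) :
    deriv (u ∘ meridianPt) z = fderiv ℝ u (meridianPt z) (e3 2) :=
  (hu.hasFDerivAt.comp_hasDerivAt z (hasDerivAt_meridianPt z)).deriv

theorem deriv_euclideanSpace_apply {ι : Type*} [Finite ι] {v : ℝ → EuclideanSpace ℝ ι}
    (hv : Differentiable ℝ v) (i : ι) : deriv (fun z => v z i) = fun z => deriv v z i := by
  cases nonempty_fintype ι
  exact deriv_eq fun z =>
    (EuclideanSpace.proj (𝕜 := ℝ) i).hasFDerivAt.comp_hasDerivAt z (hv z).hasDerivAt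

namespace IsConicalSolution

variable {u : V3 → V3} {p : V3 → ℝ} (h : IsConicalSolution u p)
include h

theorem contDiff_meridian : ContDiff ℝ 2 (u ∘ meridianPt) :=
  contDiff_iff_contDiffAt.2 fun z =>
    (h.contDiffAt (meridianPt_mem_compl_axis3 z)).comp z contDiff_meridianPt.contDiffAt

theorem differentiable_pressure_meridian : Differentiable ℝ (p ∘ meridianPt) := fun z =>
  (h.differentiableAt_pressure (meridianPt_mem_compl_axis3 z)).comp z
    (hasDerivAt_meridianPt z).differentiableAt

theorem fderiv_meridian_e3_two (z : ℝ) :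
    fderiv ℝ u (meridianPt z) (e3 2) = deriv (u ∘ meridianPt) z :=
  (deriv_comp_meridianPt (h.differentiableAt (meridianPt_mem_compl_axis3 z))).symm

theorem fderiv_fderiv_meridian_e3_two (z : ℝ) :
    fderiv ℝ (fderiv ℝ u) (meridianPt z) (e3 2) (e3 2) = deriv (deriv (u ∘ meridianPt)) z := by
  have hu' : DifferentiableAt ℝ (fderiv ℝ u) (meridianPt z) :=
    ((h.contDiffAt (meridianPt_mem_compl_axis3 z)).fderiv_right (m := 1) le_rfl).differentiableAt
      one_ne_zero
  rw [funext fun z => (h.fderiv_meridian_e3_two z).symm]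
  exact ((hu'.hasFDerivAt.comp_hasDerivAt z (hasDerivAt_meridianPt z)).clm_apply
    (hasDerivAt_const z (e3 2))).deriv.symm ▸ by simp

theorem fderiv_meridian_e3_zero (z : ℝ) :
    fderiv ℝ u (meridianPt z) (e3 0) = -u (meridianPt z) - z • deriv (u ∘ meridianPt) z := by
  rw [e3_zero_eq_sub z, map_sub, map_smul, h.fderiv_apply_self (meridianPt_mem_compl_axis3 z),
    h.fderiv_meridian_e3_two]

theorem fderiv_meridian_e3_one (z : ℝ) :
    fderiv ℝ u (meridianPt z) (e3 1) = rotGen (u (meridianPt z)) := by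
  rw [e3_one_eq_rotGen z, h.fderiv_rotGen (meridianPt_mem_compl_axis3 z)]

theorem fderiv_fderiv_apply_self {x : V3} (hx : x ∈ axis3ᶜ) (v : V3) :
    fderiv ℝ (fderiv ℝ u) x v x = -(2 : ℝ) • fderiv ℝ u x v := by
  have heuler : ∀ᶠ y in 𝓝 x, fderiv ℝ u y (ContinuousLinearMap.id ℝ V3 y)
      = (-ContinuousLinearMap.id ℝ V3) (u y) :=
    (isOpen_compl_axis3.eventually_mem hx).mono fun y hy => h.fderiv_apply_self hy
  refine (fderiv_fderiv_apply_of_fderiv_apply_eq (h.contDiffAt hx) heuler v).trans ?_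
  simp [two_smul, sub_eq_add_neg]

theorem fderiv_fderiv_rotGen {x : V3} (hx : x ∈ axis3ᶜ) (v : V3) :
    fderiv ℝ (fderiv ℝ u) x v (rotGen x) = rotGen (fderiv ℝ u x v) - fderiv ℝ u x (rotGen v) :=
  fderiv_fderiv_apply_of_fderiv_apply_eq (h.contDiffAt hx)
    ((isOpen_compl_axis3.eventually_mem hx).mono fun _ hy => h.fderiv_rotGen hy) v

theorem laplacian_meridian (z : ℝ) :
    Δ u (meridianPt z) = (1 + z ^ 2) • deriv (deriv (u ∘ meridianPt)) z
      + (3 * z) • deriv (u ∘ meridianPt) z + u (meridianPt z)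
      + rotGen (rotGen (u (meridianPt z))) := by
  have hx := meridianPt_mem_compl_axis3 z
  have hsymm : IsSymmSndFDerivAt ℝ u (meridianPt z) :=
    (h.contDiffAt hx).isSymmSndFDerivAt (by simp)
  have h₁₁ : fderiv ℝ (fderiv ℝ u) (meridianPt z) (e3 1) (e3 1)
      = rotGen (rotGen (u (meridianPt z))) + fderiv ℝ u (meridianPt z) (e3 0) := by
    nth_rw 2 [e3_one_eq_rotGen z]
    rw [h.fderiv_fderiv_rotGen hx, h.fderiv_meridian_e3_one, rotGen_e3_one, map_neg, sub_neg_eq_add]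
  have h₂₀ : fderiv ℝ (fderiv ℝ u) (meridianPt z) (e3 2) (e3 0)
      = -(2 : ℝ) • deriv (u ∘ meridianPt) z - z • deriv (deriv (u ∘ meridianPt)) z := by
    rw [e3_zero_eq_sub z, map_sub, map_smul, h.fderiv_fderiv_apply_self hx,
      h.fderiv_meridian_e3_two, h.fderiv_fderiv_meridian_e3_two]
  have h₀₀ : fderiv ℝ (fderiv ℝ u) (meridianPt z) (e3 0) (e3 0)
      = -(2 : ℝ) • fderiv ℝ u (meridianPt z) (e3 0)
        - z • fderiv ℝ (fderiv ℝ u) (meridianPt z) (e3 2) (e3 0) := by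
    rw [hsymm.eq (e3 2)]
    nth_rw 2 [e3_zero_eq_sub z]
    rw [map_sub, map_smul, h.fderiv_fderiv_apply_self hx]
  rw [laplacian_eq_sum_fderiv_fderiv, Fin.sum_univ_three, h₀₀, h₁₁, h₂₀,
    h.fderiv_fderiv_meridian_e3_two, h.fderiv_meridian_e3_zero]
  module

theorem convection_meridian (z : ℝ) :
    fderiv ℝ u (meridianPt z) (u (meridianPt z))
      = (u (meridianPt z) 2 - z * u (meridianPt z) 0) • deriv (u ∘ meridianPt) z
        - u (meridianPt z) 0 • u (meridianPt z)
        + u (meridianPt z) 1 • rotGen (u (meridianPt z)) := by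
  conv_lhs => rw [← sum_smul_e3 (u (meridianPt z)), Fin.sum_univ_three]
  rw [map_add, map_add, map_smul, map_smul, map_smul, h.fderiv_meridian_e3_zero,
    h.fderiv_meridian_e3_one, h.fderiv_meridian_e3_two]
  module

theorem gradient_meridian (z : ℝ) :
    ∇ p (meridianPt z) = !₂[-2 * p (meridianPt z) - z * deriv (p ∘ meridianPt) z, 0,
      deriv (p ∘ meridianPt) z] := by
  have hx := meridianPt_mem_compl_axis3 z
  have h₂ : fderiv ℝ p (meridianPt z) (e3 2) = deriv (p ∘ meridianPt) z :=
    (deriv_comp_meridianPt (h.differentiableAt_pressure hx)).symm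
  have h₁ : fderiv ℝ p (meridianPt z) (e3 1) = 0 := by
    rw [e3_one_eq_rotGen z, h.fderiv_pressure_rotGen hx]
  have h₀ : fderiv ℝ p (meridianPt z) (e3 0)
      = -2 * p (meridianPt z) - z * deriv (p ∘ meridianPt) z := by
    rw [e3_zero_eq_sub z, map_sub, map_smul, h.fderiv_pressure_apply_self hx, h₂, smul_eq_mul]
  ext i
  rw [gradient_apply, pd]
  fin_cases i
  · exact h₀
  · exact h₁
  · exact h₂

theorem momentum_meridian (z : ℝ) :
    -((1 + z ^ 2) • deriv (deriv (u ∘ meridianPt)) z + (3 * z) • deriv (u ∘ meridianPt) z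
        + u (meridianPt z) + rotGen (rotGen (u (meridianPt z))))
      + ((u (meridianPt z) 2 - z * u (meridianPt z) 0) • deriv (u ∘ meridianPt) z
        - u (meridianPt z) 0 • u (meridianPt z)
        + u (meridianPt z) 1 • rotGen (u (meridianPt z)))
      + !₂[-2 * p (meridianPt z) - z * deriv (p ∘ meridianPt) z, 0,
        deriv (p ∘ meridianPt) z] = 0 := by
  have hx := meridianPt_mem_compl_axis3 z
  rw [← h.laplacian_meridian, ← h.convection_meridian, ← h.gradient_meridian]
  exact (h.nsEq _ hx).momentum (h.contDiffAt hx)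

theorem divergence_meridian (z : ℝ) :
    deriv (u ∘ meridianPt) z 2 = z * deriv (u ∘ meridianPt) z 0 := by
  have hx := meridianPt_mem_compl_axis3 z
  have hdiv := (h.nsEq _ hx).div (h.differentiableAt hx)
  rw [Fin.sum_univ_three, h.fderiv_meridian_e3_zero, h.fderiv_meridian_e3_one,
    h.fderiv_meridian_e3_two] at hdiv
  simp only [PiLp.sub_apply, PiLp.neg_apply, PiLp.smul_apply, smul_eq_mul, rotGen_apply,
    Matrix.cons_val] at hdiv
  linear_combination hdiv

theorem isConicalProfile :
    IsConicalProfile (fun z => u (meridianPt z) 0 + z * u (meridianPt z) 2)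
      (fun z => u (meridianPt z) 2 - z * u (meridianPt z) 0) (fun z => u (meridianPt z) 1)
      (fun z => (1 + z ^ 2) * p (meridianPt z)) := by
  have hreg := h.contDiff_meridian
  have hreg_apply (i : Fin 3) : ContDiff ℝ 2 fun z => u (meridianPt z) i :=
    contDiff_euclidean.1 hreg i
  have hderiv (i : Fin 3) : deriv (fun z => u (meridianPt z) i)
      = fun z => deriv (u ∘ meridianPt) z i :=
    deriv_euclideanSpace_apply (hreg.differentiable two_ne_zero) i
  have hderiv₂ (i : Fin 3) (z : ℝ) : deriv (deriv fun z => u (meridianPt z) i) z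
      = deriv (deriv (u ∘ meridianPt)) z i := by
    rw [hderiv, deriv_euclideanSpace_apply fun z =>
      (hasDerivAt_deriv_of_contDiff_two h.contDiff_meridian z).differentiableAt]
  have hmom (i : Fin 3) (z : ℝ) := congrFun (congrArg WithLp.ofLp (h.momentum_meridian z)) i
  refine isConicalProfile_of_cartesian (q := p ∘ meridianPt) (hreg_apply 0) (hreg_apply 1)
    (hreg_apply 2) h.differentiable_pressure_meridian (fun z => ?_) (fun z => ?_) (fun z => ?_)
    fun z => ?_
  · simpa only [hderiv] using h.divergence_meridian z
  · have hmom₀ := hmom 0 z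
    simp only [rotGen_apply, Matrix.cons_val, PiLp.add_apply, PiLp.sub_apply, PiLp.neg_apply,
      PiLp.smul_apply, PiLp.zero_apply, smul_eq_mul] at hmom₀
    rw [hderiv₂, hderiv, Function.comp_apply]
    linear_combination hmom₀
  · have hmom₁ := hmom 1 z
    simp only [rotGen_apply, Matrix.cons_val, PiLp.add_apply, PiLp.sub_apply, PiLp.neg_apply,
      PiLp.smul_apply, PiLp.zero_apply, smul_eq_mul] at hmom₁
    rw [hderiv₂, hderiv]
    linear_combination hmom₁
  · have hmom₂ := hmom 2 z
    simp only [rotGen_apply, Matrix.cons_val, PiLp.add_apply, PiLp.sub_apply, PiLp.neg_apply,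
      PiLp.smul_apply, PiLp.zero_apply, smul_eq_mul] at hmom₂
    rw [hderiv₂, hderiv]
    linear_combination hmom₂

end IsConicalSolution

/-! ### Behaviour at the poles -/

theorem tendsto_rho_nhdsWithin_compl_axis3 {x₀ : V3} (h₀ : rho x₀ = 0) :
    Tendsto rho (𝓝[axis3ᶜ] x₀) (𝓝[>] 0) :=
  tendsto_nhdsWithin_iff.2 ⟨(h₀ ▸ continuous_rho.tendsto x₀).mono_left nhdsWithin_le_nhds,
    eventually_mem_nhdsWithin.mono fun _ => rho_pos_iff.2⟩

theorem tendsto_div_rho_cobounded {x₀ : V3} (h₀ : rho x₀ = 0) (h₂ : x₀ 2 ≠ 0) :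
    Tendsto (fun x => x 2 / rho x) (𝓝[axis3ᶜ] x₀) (cobounded ℝ) := by
  have hheight : Tendsto (fun x : V3 => ‖x 2‖) (𝓝[axis3ᶜ] x₀) (𝓝 ‖x₀ 2‖) :=
    (by fun_prop : Continuous fun x : V3 => ‖x 2‖).continuousWithinAt
  refine tendsto_norm_atTop_iff_cobounded.1 ((hheight.pos_mul_atTop (norm_pos_iff.2 h₂)
    (tendsto_inv_nhdsGT_zero.comp (tendsto_rho_nhdsWithin_compl_axis3 h₀))).congr fun x => ?_)
  rw [norm_div, div_eq_mul_inv, Real.norm_of_nonneg (show 0 ≤ rho x from Real.sqrt_nonneg _),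
    Function.comp_apply]

theorem sphere2_diff_poles_subset : sphere2 \ {S3, N3} ⊆ axis3ᶜ :=
  sphere2_diff_poles.subset.trans Set.inter_subset_right

theorem sqrt_one_add_div_rho_sq {x : V3} (hx : x ∈ sphere2 \ {S3, N3}) :
    √(1 + (x 2 / rho x) ^ 2) = (rho x)⁻¹ := by
  have hρ : 0 < rho x := rho_pos_iff.2 (sphere2_diff_poles_subset hx)
  have hnorm := norm_sq_eq_rho_sq_add x
  rw [mem_sphere_zero_iff_norm.1 hx.1] at hnorm
  rw [Real.sqrt_eq_iff_eq_sq (by positivity) (by positivity)]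
  field_simp
  linear_combination -hnorm

theorem norm_meridianPt (z : ℝ) : ‖meridianPt z‖ = √(1 + z ^ 2) := by
  rw [← Real.sqrt_sq (norm_nonneg _), norm_sq_eq_rho_sq_add, rho_meridianPt, one_pow]
  simp [meridianPt_eq]

theorem eRv_mem_sphere2_diff_poles {x : V3} (hx : x ∈ axis3ᶜ) : eRv x ∈ sphere2 \ {S3, N3} :=
  (cone3_sphere2_diff_poles.ge hx).2

theorem tendsto_eRv_meridianPt {l : Filter ℝ} {s : ℝ} (hl : l ≤ cobounded ℝ)
    (hs : Tendsto (fun z => z / √(1 + z ^ 2)) l (𝓝 s)) :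
    Tendsto (fun z => eRv (meridianPt z)) l (𝓝[sphere2 \ {S3, N3}] (s • e3 2)) := by
  refine tendsto_nhdsWithin_iff.2 ⟨?_,
    .of_forall fun z => eRv_mem_sphere2_diff_poles (meridianPt_mem_compl_axis3 z)⟩
  have hlim := (((tendsto_sqrt_one_add_sq_cobounded.mono_left hl).inv_tendsto_atTop).smul_const
    (e3 0)).add (hs.smul_const (e3 2))
  rw [zero_smul, zero_add] at hlim
  refine hlim.congr fun z => ?_
  rw [eRv, norm_meridianPt, meridianPt, smul_add, smul_smul, div_eq_inv_mul, Pi.inv_apply]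

theorem isLittleO_inv_rho_of_le_log {F : Type*} [NormedAddCommGroup F] {u : V3 → F} {x₀ : V3}
    {s : Set V3} {C : ℝ} (hs : s ⊆ axis3ᶜ) (h₀ : rho x₀ = 0)
    (hu : ∀ᶠ x in 𝓝[s] x₀, ‖u x‖ ≤ C * |log (rho x)|) :
    u =o[𝓝[s] x₀] fun x => (rho x)⁻¹ := by
  have hlog : log =o[𝓝[>] 0] fun t : ℝ => t⁻¹ := by
    simpa only [Real.rpow_neg_one] using isLittleO_log_rpow_nhdsGT_zero (r := -1) (by norm_num)
  exact (IsBigO.of_bound C hu).trans_isLittleO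
    (hlog.comp_tendsto ((tendsto_rho_nhdsWithin_compl_axis3 h₀).mono_left (nhdsWithin_mono _ hs)))

namespace IsConicalSolution

variable {u : V3 → V3} {p : V3 → ℝ} (h : IsConicalSolution u p)
include h

theorem norm_eq {x : V3} (hx : x ∈ axis3ᶜ) :
    ‖u x‖ = (rho x)⁻¹ * ‖u (meridianPt (x 2 / rho x))‖ := by
  have hρ : 0 < rho x := rho_pos_iff.2 hx
  have hmer := meridianPt_mem_compl_axis3 (x 2 / rho x)
  conv_lhs => rw [eq_rho_smul_rotZ_meridianPt hx]
  rw [h.velocity_smul _ (rotZ_mem_compl_axis3 _ hmer) _ hρ, h.axisymOn.map_rotZ _ hmer, norm_smul,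
    LinearIsometryEquiv.norm_map, Real.norm_of_nonneg (inv_nonneg.2 hρ.le)]

theorem uPc_eq {x : V3} (hx : x ∈ axis3ᶜ) :
    uPc u x = (rho x)⁻¹ * u (meridianPt (x 2 / rho x)) 1 := by
  have hρ : 0 < rho x := rho_pos_iff.2 hx
  have hmer := meridianPt_mem_compl_axis3 (x 2 / rho x)
  have hnorm : ‖x‖ = ‖rho x • meridianPt (x 2 / rho x)‖ := by
    conv_lhs => rw [eq_rho_smul_rotZ_meridianPt hx]
    rw [norm_smul, norm_smul, LinearIsometryEquiv.norm_map]
  have hheight : x 2 = (rho x • meridianPt (x 2 / rho x)) 2 := by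
    simp [meridianPt_eq, mul_div_cancel₀ _ hρ.ne']
  rw [(h.axisymOn x hx _ (smul_mem_compl_axis3 hρ hmer) hnorm hheight).2.2, uPc,
    h.velocity_smul _ hmer _ hρ, rho_smul hρ.le, rho_meridianPt]
  simp [meridianPt_eq]
  field_simp

theorem tendsto_meridian {l : Filter ℝ} {x₀ : V3}
    (hl : Tendsto (fun z => eRv (meridianPt z)) l (𝓝[sphere2 \ {S3, N3}] x₀))
    (hu : u =o[𝓝[sphere2 \ {S3, N3}] x₀] fun x => (rho x)⁻¹) :
    Tendsto (u ∘ meridianPt) l (𝓝 0) := by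
  have hpos (z : ℝ) : 0 < ‖meridianPt z‖ := by
    rw [norm_meridianPt]
    positivity
  refine (isLittleO_one_iff ℝ).1 (((isBigO_refl (fun z => ‖meridianPt z‖⁻¹) l).smul_isLittleO
    (hu.comp_tendsto hl)).congr (fun z => ?_) fun z => ?_)
  · rw [Function.comp_apply, eRv,
      h.velocity_smul _ (meridianPt_mem_compl_axis3 z) _ (inv_pos.2 (hpos z)), inv_inv,
      inv_smul_smul₀ (hpos z).ne', Function.comp_apply]
  · rw [Function.comp_apply, eRv, rho_smul (inv_nonneg.2 (hpos z).le), rho_meridianPt, mul_one,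
      inv_inv, smul_eq_mul, inv_mul_cancel₀ (hpos z).ne']

theorem tendsto_meridian_cobounded
    (hS : u =o[𝓝[sphere2 \ {S3, N3}] S3] fun x => (rho x)⁻¹)
    (hN : u =o[𝓝[sphere2 \ {S3, N3}] N3] fun x => (rho x)⁻¹) :
    Tendsto (u ∘ meridianPt) (cobounded ℝ) (𝓝 0) := by
  have hbot := tendsto_eRv_meridianPt IsOrderBornology.atBot_le_cobounded
    tendsto_div_sqrt_one_add_sq_atBot
  have htop := tendsto_eRv_meridianPt IsOrderBornology.atTop_le_cobounded
    tendsto_div_sqrt_one_add_sq_atTop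
  rw [show (-1 : ℝ) • e3 2 = S3 by simp [e3, S3, ← PiLp.single_neg]] at hbot
  rw [show (1 : ℝ) • e3 2 = N3 from one_smul ℝ _] at htop
  rw [IsOrderBornology.cobounded_eq]
  exact (h.tendsto_meridian hbot hS).sup (h.tendsto_meridian htop hN)

section Decay

variable (hdecay : Tendsto (u ∘ meridianPt) (cobounded ℝ) (𝓝 0))
include hdecay

theorem swirl_meridian_eq_zero (z : ℝ) : u (meridianPt z) 1 = 0 := by
  have hswirl : Tendsto (fun z => u (meridianPt z) 1) (cobounded ℝ) (𝓝 0) :=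
    ((EuclideanSpace.proj (𝕜 := ℝ) 1).continuous.tendsto' 0 0 (map_zero _)).comp hdecay
  rw [IsOrderBornology.cobounded_eq, tendsto_sup] at hswirl
  exact h.isConicalProfile.swirl_eq_zero hswirl.1 hswirl.2 z

theorem norm_eq_sqrt {x : V3} (hx : x ∈ sphere2 \ {S3, N3}) (z : ℝ) (hz : x 2 / rho x = z) :
    ‖u x‖ = √((u (meridianPt z) 0 + z * u (meridianPt z) 2) ^ 2
      + (u (meridianPt z) 2 - z * u (meridianPt z) 0) ^ 2) := by
  rw [h.norm_eq (sphere2_diff_poles_subset hx), ← sqrt_one_add_div_rho_sq hx, hz,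
    EuclideanSpace.norm_eq, ← Real.sqrt_mul (by positivity), Fin.sum_univ_three,
    h.swirl_meridian_eq_zero hdecay]
  congr 1
  simp only [Real.norm_eq_abs, sq_abs]
  ring

theorem tendsto_norm_div_log : ∃ L ≤ 0, ∀ x₀ : V3, rho x₀ = 0 → x₀ 2 ≠ 0 →
    Tendsto (fun x => ‖u x‖ / log (rho x)) (𝓝[sphere2 \ {S3, N3}] x₀) (𝓝 L) := by
  have hcoord (i : Fin 3) : (fun z => u (meridianPt z) i) =o[cobounded ℝ] fun _ => (1 : ℝ) :=
    (isLittleO_one_iff ℝ).2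
      (((EuclideanSpace.proj (𝕜 := ℝ) i).continuous.tendsto' 0 0 (map_zero _)).comp hdecay)
  have hlow (i : Fin 3) : (fun z => u (meridianPt z) i) =o[cobounded ℝ] id :=
    (hcoord i).trans_isBigO (isLittleO_const_id_cobounded 1).isBigO
  have hlin (i : Fin 3) : (fun z => z * u (meridianPt z) i) =o[cobounded ℝ] id :=
    ((isBigO_refl id (cobounded ℝ)).mul_isLittleO (hcoord i)).congr_right fun z => mul_one z
  have hprof := h.isConicalProfile
  rw [funext (h.swirl_meridian_eq_zero hdecay)] at hprof
  obtain ⟨L, hL, hlim⟩ := hprof.tendsto_norm_div_log ((hlow 0).add (hlin 2))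
    ((hlow 2).sub (hlin 0))
  refine ⟨-L, neg_nonpos.2 hL, fun x₀ h₀ h₂ => ((hlim.comp ((tendsto_div_rho_cobounded h₀
    h₂).mono_left (nhdsWithin_mono _ sphere2_diff_poles_subset))).neg).congr' ?_⟩
  filter_upwards [self_mem_nhdsWithin] with x hx
  rw [Function.comp_apply, ← h.norm_eq_sqrt hdecay hx _ rfl, sqrt_one_add_div_rho_sq hx,
    Real.log_inv, div_neg, neg_neg]

end Decay

end IsConicalSolution

theorem rho_S3 : rho S3 = 0 := by simp [rho, S3]

theorem rho_N3 : rho N3 = 0 := by simp [rho, N3]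

theorem type_two_no_swirl_general (u : V3 → V3) (p : V3 → ℝ)
    (hu_hom : ∀ x ∈ cone3 (sphere2 \ {S3, N3}), ∀ lam : ℝ, 0 < lam →
      u (lam • x) = lam⁻¹ • u x)
    (hp_hom : ∀ x ∈ cone3 (sphere2 \ {S3, N3}), ∀ lam : ℝ, 0 < lam →
      p (lam • x) = (lam ^ 2)⁻¹ * p x)
    (hu_reg : ContDiffOn ℝ 2 u (cone3 (sphere2 \ {S3, N3})))
    (hp_reg : DifferentiableOn ℝ p (cone3 (sphere2 \ {S3, N3})))
    (haxi : AxisymOn u (cone3 (sphere2 \ {S3, N3})))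
    (hNS : ∀ x ∈ cone3 (sphere2 \ {S3, N3}), NSEq u p x)
    (hS : u =o[𝓝[sphere2 \ {S3, N3}] S3] fun x => (rho x)⁻¹)
    (hN : u =o[𝓝[sphere2 \ {S3, N3}] N3] fun x => (rho x)⁻¹) :
    (∀ x ∈ cone3 (sphere2 \ {S3, N3}), uPc u x = 0) ∧
    (∃ L : ℝ, L ≤ 0 ∧
      Tendsto (fun x => ‖u x‖ / Real.log (rho x)) (𝓝[sphere2 \ {S3, N3}] S3) (𝓝 L) ∧
      Tendsto (fun x => ‖u x‖ / Real.log (rho x)) (𝓝[sphere2 \ {S3, N3}] N3) (𝓝 L)) := by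
  rw [cone3_sphere2_diff_poles] at *
  have h : IsConicalSolution u p := ⟨hu_hom, hp_hom, hu_reg, hp_reg, haxi, hNS⟩
  have hdecay := h.tendsto_meridian_cobounded hS hN
  obtain ⟨L, hL, hlim⟩ := h.tendsto_norm_div_log hdecay
  refine ⟨fun x hx => ?_, L, hL, hlim S3 rho_S3 (by simp [S3]), hlim N3 rho_N3 (by simp [N3])⟩
  rw [h.uPc_eq hx, h.swirl_meridian_eq_zero hdecay, mul_zero]

/-- Type 2 axisymmetric solutions on `S² \ {S,N}` have no swirl and
logarithmic limits at both poles (Lemma 3.1, first part). -/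
theorem type_two_no_swirl (u : V3 → V3) (p : V3 → ℝ)
    (hu_hom : ∀ x ∈ cone3 (sphere2 \ {S3, N3}), ∀ lam : ℝ, 0 < lam →
      u (lam • x) = lam⁻¹ • u x)
    (hp_hom : ∀ x ∈ cone3 (sphere2 \ {S3, N3}), ∀ lam : ℝ, 0 < lam →
      p (lam • x) = (lam ^ 2)⁻¹ * p x)
    (hu_reg : ContDiffOn ℝ 2 u (cone3 (sphere2 \ {S3, N3})))
    (hp_reg : ContDiffOn ℝ 1 p (cone3 (sphere2 \ {S3, N3})))
    (haxi : AxisymOn u (cone3 (sphere2 \ {S3, N3})))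
    (hNS : ∀ x ∈ cone3 (sphere2 \ {S3, N3}), NSEq u p x)
    (hbound : ∃ C : ℝ,
      (∀ᶠ x in 𝓝[sphere2 \ {S3, N3}] S3, ‖u x‖ ≤ C * |Real.log (rho x)|) ∧
      (∀ᶠ x in 𝓝[sphere2 \ {S3, N3}] N3, ‖u x‖ ≤ C * |Real.log (rho x)|)) :
    (∀ x ∈ cone3 (sphere2 \ {S3, N3}), uPc u x = 0) ∧
    (∃ L : ℝ, L ≤ 0 ∧
      Tendsto (fun x => ‖u x‖ / Real.log (rho x)) (𝓝[sphere2 \ {S3, N3}] S3) (𝓝 L) ∧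
      Tendsto (fun x => ‖u x‖ / Real.log (rho x)) (𝓝[sphere2 \ {S3, N3}] N3) (𝓝 L)) := by
  obtain ⟨C, hS, hN⟩ := hbound
  exact type_two_no_swirl_general u p hu_hom hp_hom hu_reg (hp_reg.differentiableOn one_ne_zero)
    haxi hNS (isLittleO_inv_rho_of_le_log sphere2_diff_poles_subset rho_S3 hS)
    (isLittleO_inv_rho_of_le_log sphere2_diff_poles_subset rho_N3 hN)
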